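/- arXiv:1009.3767 — 3 statements merged into one kernel-verified Lean document; each statement's English description precedes it below -/
import Mathlib

section
/- Fix integers J ≥ 1 and L ≥ 1 and an ensemble y = (y₁, …, y_J) ∈ ℝ^J. Define the restriction map R : ℝ^J → ℝ^L by R_l(z) = (1/J)·Σ_{j=1}^{J} z_j^l for l = 1, …, L, and define F : ℝ^L → ℝ^L by F(λ) = R(y + Σ_{l=1}^{L} λ_l ∇R_l(y)), where ∇R_l(y) ∈ ℝ^J is the gradient of R_l at y, i.e., (∇R_l(y))_j = l·y_j^{l−1}/J. Then F is continuously differentiable, and its Jacobian matrix at λ = 0 is given by (DF(0))_{i,k} = (i·k/J)·Û_{i+k−2} for i, k = 1, …, L, where Û_m = (1/J)·Σ_{j=1}^{J} y_j^m is the m-th empirical moment of the ensemble. Consequently det DF(0) = (L!)² · J^{−L} · det((Û_{i+k−2})_{i,k=1,…,L}). -/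
/-!
Along the `k`-th coordinate line through `0`, the `i`-th component of the matching map is
`t ↦ (1/J) Σ_j (y_j + t (∇R_k(y))_j)^(i+1)`, a polynomial in `t` whose derivative at `0` is
`((i+1)(k+1)/J) Û_{i+k}`. As the matching map is polynomial, hence `C¹`, this directional
derivative is the Jacobian entry. Row `i` of the Jacobian thus carries the factor `(i+1)/J` and
column `k` the factor `k+1`; pulling them out of the determinant gives `(L!)² J^{-L}`.
-/

open Finset

/-- The restriction map sending an ensemble `z ∈ ℝ^J` to its first `L` empirical
standard moments: `R_l(z) = (1/J) Σ_j z_j^l`, `l = 1, …, L` (index `l : Fin L`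
corresponds to the moment of order `l.val + 1`). -/
noncomputable def restrictionMap (J L : ℕ) (z : Fin J → ℝ) : Fin L → ℝ :=
  fun l => (1 / (J : ℝ)) * ∑ j, z j ^ (l.val + 1)

/-- The gradient of the `l`-th restriction map at `y`: `(∇R_l(y))_j = l·y_j^(l−1)/J`. -/
noncomputable def restrictionGrad (J L : ℕ) (y : Fin J → ℝ) (l : Fin L) : Fin J → ℝ :=
  fun j => (l.val + 1 : ℝ) * y j ^ l.val / (J : ℝ)

/-- The matching map for the Lagrange multipliers:
`F(λ) = R(y + Σ_l λ_l ∇R_l(y))`. -/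
noncomputable def matchingMap (J L : ℕ) (y : Fin J → ℝ) (lam : Fin L → ℝ) : Fin L → ℝ :=
  restrictionMap J L (y + ∑ l, lam l • restrictionGrad J L y l)

/-- The `m`-th empirical moment `Û_m = (1/J) Σ_j y_j^m` of an ensemble `y ∈ ℝ^J`. -/
noncomputable def empiricalMoment (J : ℕ) (y : Fin J → ℝ) (m : ℕ) : ℝ :=
  (1 / (J : ℝ)) * ∑ j, y j ^ m

theorem contDiff_matchingMap (J L : ℕ) (y : Fin J → ℝ) : ContDiff ℝ 1 (matchingMap J L y) := by
  rw [contDiff_pi]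
  intro i
  simp only [matchingMap, restrictionMap, Pi.add_apply, Finset.sum_apply, Pi.smul_apply]
  fun_prop

theorem matchingMap_smul_single (J L : ℕ) (y : Fin J → ℝ) (i k : Fin L) (t : ℝ) :
    matchingMap J L y (t • Pi.single k 1) i
      = (1 / (J : ℝ)) * ∑ j, (y j + t * restrictionGrad J L y k j) ^ (i.val + 1) := by
  simp [matchingMap, restrictionMap, Pi.single_apply]

theorem fderiv_matchingMap_entry (J L : ℕ) (y : Fin J → ℝ) (i k : Fin L) :
    fderiv ℝ (matchingMap J L y) 0 (Pi.single k 1) i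
      = ((i.val + 1 : ℝ) * (k.val + 1) / (J : ℝ)) * empiricalMoment J y (i.val + k.val) := by
  have hF : HasFDerivAt (matchingMap J L y) (fderiv ℝ (matchingMap J L y) 0) 0 :=
    ((contDiff_matchingMap J L y).differentiable one_ne_zero 0).hasFDerivAt
  -- The derivative along the coordinate line, once by the chain rule ...
  have h1 : HasDerivAt (fun t : ℝ => matchingMap J L y (t • Pi.single k 1) i)
      (fderiv ℝ (matchingMap J L y) 0 (Pi.single k 1) i) 0 := by
    have h := hF.hasLineDerivAt (Pi.single k 1)
    simp only [HasLineDerivAt, zero_add] at h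
    exact (hasDerivAt_pi.1 h) i
  -- ... and once from the explicit polynomial.
  have h2 : HasDerivAt (fun t : ℝ => matchingMap J L y (t • Pi.single k 1) i)
      ((1 / (J : ℝ)) * ∑ j, ((i.val + 1 : ℕ) : ℝ) * (y j + 0 * restrictionGrad J L y k j) ^ i.val
        * (1 * restrictionGrad J L y k j)) 0 := by
    simp only [matchingMap_smul_single]
    refine HasDerivAt.const_mul _ (HasDerivAt.fun_sum fun j _ => ?_)
    exact (((hasDerivAt_id (0 : ℝ)).mul_const _).const_add (y j)).pow (i.val + 1)
  rw [h1.unique h2]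
  simp only [empiricalMoment, restrictionGrad, Finset.mul_sum]
  refine Finset.sum_congr rfl fun j _ => ?_
  push_cast
  ring

theorem prod_fin_succ_eq_factorial (L : ℕ) :
    ∏ i : Fin L, ((i.val : ℝ) + 1) = (Nat.factorial L : ℝ) := by
  rw [Fin.prod_univ_eq_prod_range (fun n => (n : ℝ) + 1) L, ← Finset.prod_range_add_one_eq_factorial]
  push_cast
  rfl

/-- The matching map `F(λ) = R(y + Σ_l λ_l ∇R_l(y))` is continuously differentiable, its
Jacobian matrix at `λ = 0` has entries `(i·k/J)·Û_{i+k−2}` (in 1-based indexing,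
i.e. `((i+1)(k+1)/J)·Û_{i+k}` for `i, k : Fin L`), and hence its Jacobian determinant at `0`
equals `(L!)² · J^{−L} · det((Û_{i+k−2})_{i,k})`. -/
theorem matchingMap_jacobian (J L : ℕ) (hJ : 1 ≤ J) (hL : 1 ≤ L) (y : Fin J → ℝ) :
    ContDiff ℝ 1 (matchingMap J L y) ∧
    (∀ i k : Fin L,
      fderiv ℝ (matchingMap J L y) 0 (Pi.single k 1) i
        = ((i.val + 1 : ℝ) * (k.val + 1) / (J : ℝ)) * empiricalMoment J y (i.val + k.val)) ∧
    Matrix.det (Matrix.of fun i k : Fin L =>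
        fderiv ℝ (matchingMap J L y) 0 (Pi.single k 1) i)
      = (Nat.factorial L : ℝ) ^ 2 * (J : ℝ) ^ (-(L : ℤ)) *
          Matrix.det (Matrix.of fun i k : Fin L => empiricalMoment J y (i.val + k.val)) := by
  refine ⟨contDiff_matchingMap J L y, fderiv_matchingMap_entry J L y, ?_⟩
  have hM : (Matrix.of fun i k : Fin L => fderiv ℝ (matchingMap J L y) 0 (Pi.single k 1) i)
      = Matrix.of fun i k : Fin L => ((i.val + 1 : ℝ) / J) *
          (Matrix.of fun i k : Fin L => ((k.val : ℝ) + 1) *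
            (Matrix.of fun i k : Fin L => empiricalMoment J y (i.val + k.val)) i k) i k := by
    ext i k
    simp only [Matrix.of_apply, fderiv_matchingMap_entry]
    ring
  rw [hM, Matrix.det_mul_column, Matrix.det_mul_row, Finset.prod_div_distrib,
    prod_fin_succ_eq_factorial, Finset.prod_const, Finset.card_univ, Fintype.card_fin,
    zpow_neg, zpow_natCast]
  ring
end

section
/- Fix integers J ≥ 1 and L ≥ 1 and an ensemble y = (y₁, …, y_J) ∈ ℝ^J. Define R : ℝ^J → ℝ^L by R_l(z) = (1/J)·Σ_{j=1}^{J} z_j^l and F : ℝ^L → ℝ^L by F(λ) = R(y + Σ_{l=1}^{L} λ_l ∇R_l(y)), where (∇R_l(y))_j = l·y_j^{l−1}/J. Let Û_m = (1/J)·Σ_{j=1}^{J} y_j^m denote the empirical moments of y. If the Hankel determinant det((Û_{i+k−2})_{i,k=1,…,L}) is nonzero, then the matching problem has a locally unique solution: there exist open neighborhoods W of 0 in ℝ^L and V of R(y) in ℝ^L such that F restricted to W is a bijection from W onto V; in particular, for every target macroscopic state U ∈ V there is a unique λ ∈ W with F(λ) = U. -/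
/-!
The proof is the inverse function theorem at `λ = 0`. With `H = (Û_{i+k})` the Hankel matrix
(indices from `0`), the Jacobian of the matching map `F` at `0` is the Gram matrix of the
gradients,
`∂F_i/∂λ_k (0) = ∇R_i(y) · ∇R_k(y) = (i + 1) (k + 1) / J * Û_{i+k}`,
that is, `H` multiplied on the left and on the right by invertible diagonal matrices. So it is
invertible exactly when the Hankel determinant is nonzero.
-/

open Finset

/-- The Jacobian of the matching map at `λ = 0`, as `D * H * (D / J)` with
`D = diag(1, …, L)` and `H` the Hankel matrix of empirical moments. -/
noncomputable def matchingJacobian (J L : ℕ) (y : Fin J → ℝ) : Matrix (Fin L) (Fin L) ℝ :=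
  Matrix.diagonal (fun i : Fin L => (i.val + 1 : ℝ)) *
    (Matrix.of fun i k : Fin L => empiricalMoment J y (i.val + k.val)) *
    Matrix.diagonal (fun k : Fin L => (k.val + 1 : ℝ) / (J : ℝ))

lemma matchingJacobian_det_ne_zero (J L : ℕ) (hJ : 1 ≤ J) (y : Fin J → ℝ)
    (hdet : Matrix.det (Matrix.of fun i k : Fin L =>
        empiricalMoment J y (i.val + k.val)) ≠ 0) :
    (matchingJacobian J L y).det ≠ 0 := by
  have hJ' : (J : ℝ) ≠ 0 := by exact_mod_cast (by omega : J ≠ 0)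
  rw [matchingJacobian, Matrix.det_mul, Matrix.det_mul, Matrix.det_diagonal, Matrix.det_diagonal]
  refine mul_ne_zero (mul_ne_zero ?_ hdet) ?_
  · exact Finset.prod_ne_zero_iff.2 fun i _ => by positivity
  · exact Finset.prod_ne_zero_iff.2 fun i _ => div_ne_zero (by positivity) hJ'

lemma matchingMap_hasStrictFDerivAt (J L : ℕ) (y : Fin J → ℝ) :
    HasStrictFDerivAt (matchingMap J L y)
      (LinearMap.toContinuousLinearMap (Matrix.toLin' (matchingJacobian J L y))) 0 := by
  rw [hasStrictFDerivAt_pi']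
  intro i
  -- each particle position depends affinely on `λ`
  have hpos : ∀ j : Fin J, HasStrictFDerivAt
      (fun lam : Fin L → ℝ => y j + ∑ l, lam l * restrictionGrad J L y l j)
      (∑ l, restrictionGrad J L y l j •
        ContinuousLinearMap.proj (R := ℝ) (φ := fun _ : Fin L => ℝ) l) 0 := fun j =>
    (HasStrictFDerivAt.fun_sum fun l _ =>
      (hasStrictFDerivAt_apply (𝕜 := ℝ) l (0 : Fin L → ℝ)).mul_const
        (restrictionGrad J L y l j)).const_add (y j)
  have hsum := (HasStrictFDerivAt.fun_sum (u := Finset.univ) fun j _ =>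
    (hpos j).pow (i.val + 1)).const_mul (1 / (J : ℝ))
  have hfun : (fun lam => matchingMap J L y lam i) = fun lam : Fin L → ℝ =>
      1 / (J : ℝ) * ∑ j, (y j + ∑ l, lam l * restrictionGrad J L y l j) ^ (i.val + 1) := by
    funext lam
    simp [matchingMap, restrictionMap]
  rw [hfun]
  refine hsum.congr_fderiv ?_
  ext v
  simp only [matchingJacobian, restrictionGrad, empiricalMoment, Matrix.toLin'_apply,
    Matrix.mulVec, dotProduct, _root_.smul_apply, _root_.sum_apply,
    ContinuousLinearMap.comp_apply, ContinuousLinearMap.proj_apply,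
    LinearMap.coe_toContinuousLinearMap', Matrix.mul_diagonal, Matrix.diagonal_mul,
    Matrix.of_apply, smul_eq_mul, Pi.zero_apply, zero_mul, Finset.sum_const_zero, add_zero,
    Nat.add_sub_cancel, Finset.mul_sum, Finset.sum_mul, nsmul_eq_mul]
  rw [Finset.sum_comm]
  refine Finset.sum_congr rfl fun k _ => Finset.sum_congr rfl fun j _ => ?_
  push_cast
  ring

/-- Local unique solvability of the matching problem with standard empirical moments:
if the Hankel determinant `det((Û_{i+k−2})_{i,k=1,…,L})` of the empirical moments of the
ensemble `y` is nonzero, then there are open neighborhoods `W` of `0` and `V` of `R(y)`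
such that the matching map `F(λ) = R(y + Σ_l λ_l ∇R_l(y))` is a bijection from `W` onto `V`;
in particular every target macroscopic state `U ∈ V` is matched by a unique `λ ∈ W`. -/
theorem matching_locally_unique (J L : ℕ) (hJ : 1 ≤ J) (hL : 1 ≤ L) (y : Fin J → ℝ)
    (hdet : Matrix.det (Matrix.of fun i k : Fin L =>
        empiricalMoment J y (i.val + k.val)) ≠ 0) :
    ∃ W V : Set (Fin L → ℝ), IsOpen W ∧ IsOpen V ∧
      (0 : Fin L → ℝ) ∈ W ∧ restrictionMap J L y ∈ V ∧
      Set.BijOn (matchingMap J L y) W V ∧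
      ∀ U ∈ V, ∃! lam : Fin L → ℝ, lam ∈ W ∧ matchingMap J L y lam = U := by
  let A := LinearMap.toContinuousLinearMap (Matrix.toLin' (matchingJacobian J L y))
  have hA : A.det ≠ 0 := by
    change LinearMap.det (Matrix.toLin' (matchingJacobian J L y)) ≠ 0
    rw [LinearMap.det_toLin']
    exact matchingJacobian_det_ne_zero J L hJ y hdet
  have hF : HasStrictFDerivAt (matchingMap J L y)
      (A.toContinuousLinearEquivOfDetNeZero hA : (Fin L → ℝ) →L[ℝ] (Fin L → ℝ)) 0 :=
    (matchingMap_hasStrictFDerivAt J L y).congr_fderiv (by ext; rfl)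
  let e := hF.toOpenPartialHomeomorph (matchingMap J L y)
  have h0 : matchingMap J L y 0 = restrictionMap J L y := by simp [matchingMap]
  have hbij : Set.BijOn (matchingMap J L y) e.source e.target := e.bijOn
  refine ⟨e.source, e.target, e.open_source, e.open_target,
    hF.mem_toOpenPartialHomeomorph_source, h0 ▸ hF.image_mem_toOpenPartialHomeomorph_target,
    hbij, fun U hU => ?_⟩
  obtain ⟨lam, hlam, rfl⟩ := hbij.surjOn hU
  exact ⟨lam, ⟨hlam, rfl⟩, fun mu hmu => hbij.injOn hmu.1 hlam hmu.2⟩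
end

section
/- Let p ≥ 0 be an integer and let β ∈ [0, 1]. Define l_s(β) = ∏_{j=0, j≠s}^{p} (β + j)/(j − s) for s = 0, …, p. Then for each s, |l_s(β)| ≤ (p+1)! / ((s+1)·s!·(p−s)!), and consequently Σ_{s=0}^{p} |l_s(β)| ≤ Σ_{s=0}^{p} (p+1)!/((s+1)·s!·(p−s)!), a bound that is independent of β. Hence the amplification factor Σ_s |l_s(β)| of the multistep state extrapolation is bounded uniformly in the extrapolation fraction β ∈ [0, 1]. -/
/-!
The denominators of `l_s(β)` do not involve `β`: the distances from `s` to the other integers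
`0, …, p` multiply to `s! (p - s)!`. In the numerator, `0 ≤ β ≤ 1` gives `|β + j| ≤ j + 1`, and the
product of `j + 1` over all `j ≠ s` is `(p + 1)! / (s + 1)`. The quotient of the two is the bound
on `|l_s(β)|`, and summing over `s` bounds the amplification factor.
-/

open Finset

lemma prod_range_abs_sub (s : ℕ) :
    ∏ j ∈ Finset.range s, |(j : ℝ) - (s : ℝ)| = (Nat.factorial s : ℝ) := by
  induction s with
  | zero => simp
  | succ n ih =>
    rw [Finset.prod_range_succ', Nat.factorial_succ]
    have h : |((0 : ℕ) : ℝ) - ((n + 1 : ℕ) : ℝ)| = (n : ℝ) + 1 := by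
      rw [abs_sub_comm, abs_of_nonneg] <;> push_cast <;> linarith [(n.cast_nonneg : (0 : ℝ) ≤ n)]
    rw [h]
    push_cast
    simp only [add_sub_add_right_eq_sub]
    rw [ih, mul_comm]

lemma prod_erase_abs_sub (s k : ℕ) :
    ∏ j ∈ (Finset.range (s + k + 1)).erase s, |(j : ℝ) - (s : ℝ)|
      = (Nat.factorial s : ℝ) * (Nat.factorial k : ℝ) := by
  induction k with
  | zero =>
    rw [add_zero, Finset.range_add_one, Finset.erase_insert Finset.notMem_range_self,
      prod_range_abs_sub]
    simp
  | succ n ih =>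
    rw [← add_assoc, Finset.range_add_one, Finset.erase_insert_of_ne (by omega),
      Finset.prod_insert (by simp), ih, Nat.factorial_succ]
    have h : |((s + n + 1 : ℕ) : ℝ) - (s : ℝ)| = (n : ℝ) + 1 := by
      rw [abs_of_nonneg] <;> push_cast <;> linarith [(n.cast_nonneg : (0 : ℝ) ≤ n)]
    rw [h]
    push_cast
    ring

lemma prod_erase_add_one (p s : ℕ) (hs : s ∈ Finset.range (p + 1)) :
    ∏ j ∈ (Finset.range (p + 1)).erase s, ((j : ℝ) + 1)
      = (Nat.factorial (p + 1) : ℝ) / ((s : ℝ) + 1) := by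
  rw [eq_div_iff (by positivity), Finset.prod_erase_mul _ _ hs,
    ← Finset.prod_range_add_one_eq_factorial]
  push_cast
  rfl

lemma abs_coefficient_le (p : ℕ) (β : ℝ) (hβ : β ∈ Set.Icc (0 : ℝ) 1) (s : ℕ)
    (hs : s ∈ Finset.range (p + 1)) :
    |∏ j ∈ (Finset.range (p + 1)).erase s, (β + (j : ℝ)) / ((j : ℝ) - (s : ℝ))|
      ≤ (Nat.factorial (p + 1) : ℝ) /
          (((s : ℝ) + 1) * (Nat.factorial s : ℝ) * (Nat.factorial (p - s) : ℝ)) := by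
  have hden : ∏ j ∈ (Finset.range (p + 1)).erase s, |(j : ℝ) - (s : ℝ)|
      = (Nat.factorial s : ℝ) * (Nat.factorial (p - s) : ℝ) := by
    have h := prod_erase_abs_sub s (p - s)
    rwa [Nat.add_sub_cancel' (by simpa [Nat.lt_succ_iff] using hs)] at h
  have hnum : ∏ j ∈ (Finset.range (p + 1)).erase s, |β + (j : ℝ)|
      ≤ (Nat.factorial (p + 1) : ℝ) / ((s : ℝ) + 1) := by
    rw [← prod_erase_add_one p s hs]
    refine Finset.prod_le_prod (fun _ _ => abs_nonneg _) fun j _ => ?_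
    have hj : (0 : ℝ) ≤ j := j.cast_nonneg
    rw [abs_of_nonneg (by linarith [hβ.1])]
    linarith [hβ.2]
  rw [Finset.abs_prod]
  simp only [abs_div]
  rw [Finset.prod_div_distrib, hden, mul_assoc, ← div_div (Nat.factorial (p + 1) : ℝ)]
  gcongr

/-- Uniform bound on the multistep state extrapolation coefficients for `β ∈ [0,1]`:
each Lagrange coefficient `l_s(β) = ∏_{j≠s} (β+j)/(j−s)` satisfies
`|l_s(β)| ≤ (p+1)!/((s+1)·s!·(p−s)!)`, and hence the amplification factor `Σ_s |l_s(β)|`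
is bounded independently of `β`. -/
theorem extrapolation_coefficients_bounded (p : ℕ) (β : ℝ) (hβ : β ∈ Set.Icc (0 : ℝ) 1) :
    (∀ s ∈ Finset.range (p + 1),
      |∏ j ∈ (Finset.range (p + 1)).erase s, (β + (j : ℝ)) / ((j : ℝ) - (s : ℝ))|
        ≤ (Nat.factorial (p + 1) : ℝ) /
            (((s : ℝ) + 1) * (Nat.factorial s : ℝ) * (Nat.factorial (p - s) : ℝ))) ∧
    ∑ s ∈ Finset.range (p + 1),
        |∏ j ∈ (Finset.range (p + 1)).erase s, (β + (j : ℝ)) / ((j : ℝ) - (s : ℝ))|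
      ≤ ∑ s ∈ Finset.range (p + 1),
          (Nat.factorial (p + 1) : ℝ) /
            (((s : ℝ) + 1) * (Nat.factorial s : ℝ) * (Nat.factorial (p - s) : ℝ)) := by
  exact ⟨abs_coefficient_le p β hβ, Finset.sum_le_sum (abs_coefficient_le p β hβ)⟩
end
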